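/- arXiv:0805.3259 — 2 statements merged into one kernel-verified Lean document; each statement's English description precedes it below -/
import Mathlib

section
/- Let A = (λ_1, …, λ_n) be a non pyramidal regular configuration in ℤ^d of rank d, and let B be a Gale dual of A with rows b_1, …, b_n. Let S ⊆ {1, …, n} be a coparallelism class of A. Then S is a face complement if and only if there exist j, k ∈ S such that b_j and b_k are antiparallel, i.e. b_j = α·b_k for some rational α < 0. -/
/-!
By linear duality, `S` is a face complement exactly when some weights, positive on `S`, satisfy
`∑ i ∈ S, w i * v i = 0` for every `v` in the kernel of `A`. On a set of pairwise coparallel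
indices any two kernel vectors are proportional: if `u` is a kernel vector with `u k ≠ 0`, then
`v i = (u i / u k) * v k` for every kernel vector `v`. The condition on the weights thus reduces to
`∑ i ∈ S, w i * (u i / u k) = 0`, which has a positive solution iff some ratio `u j / u k` with
`j ∈ S` is negative, and these ratios are the ones between the rows of a Gale dual. If no such `u`
exists, the rows indexed by `S` are zero, hence antiparallel to themselves, and any weights will do.
-/

open Matrix

section SignChange

variable {ι R : Type*} [CommRing R] [LinearOrder R] [IsStrictOrderedRing R]
  {s : Finset ι} {c : ι → R} {k : ι}

theorem exists_neg_of_sum_pos_mul_eq_zero {w : ι → R} (hw : ∀ i ∈ s, 0 < w i)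
    (hsum : ∑ i ∈ s, w i * c i = 0) (hk : k ∈ s) (hck : c k ≠ 0) : ∃ j ∈ s, c j < 0 := by
  by_contra! hc
  have hzero := (Finset.sum_eq_zero_iff_of_nonneg
    fun i hi => mul_nonneg (hw i hi).le (hc i hi)).1 hsum k hk
  exact mul_ne_zero (hw k hk).ne' hck hzero

-- The nonpositive entries get the total of the positive ones as weight, and conversely.
theorem exists_pos_sum_mul_eq_zero {j : ι} (hj : j ∈ s) (hcj : c j < 0) (hk : k ∈ s)
    (hck : 0 < c k) : ∃ w : ι → R, (∀ i, 0 < w i) ∧ ∑ i ∈ s, w i * c i = 0 := by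
  set P := ∑ i ∈ s with 0 < c i, c i with hP
  set N := ∑ i ∈ s with ¬ 0 < c i, c i with hN
  have hP_pos : 0 < P :=
    Finset.sum_pos (fun i hi => (Finset.mem_filter.1 hi).2) ⟨k, Finset.mem_filter.2 ⟨hk, hck⟩⟩
  have hN_neg : N < 0 :=
    Finset.sum_neg' (fun i hi => not_lt.1 (Finset.mem_filter.1 hi).2)
      ⟨j, Finset.mem_filter.2 ⟨hj, hcj.not_gt⟩, hcj⟩
  refine ⟨fun i => if 0 < c i then -N else P, fun i => ?_, ?_⟩
  · dsimp only
    split_ifs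
    exacts [neg_pos.2 hN_neg, hP_pos]
  · simp only [ite_mul, Finset.sum_ite, ← Finset.mul_sum, ← hP, ← hN]
    ring

theorem exists_pos_sum_mul_eq_zero_iff (hk : k ∈ s) (hck : 0 < c k) :
    (∃ w : ι → R, (∀ i ∈ s, 0 < w i) ∧ ∑ i ∈ s, w i * c i = 0) ↔ ∃ j ∈ s, c j < 0 := by
  constructor
  · rintro ⟨w, hw, hsum⟩
    exact exists_neg_of_sum_pos_mul_eq_zero hw hsum hk hck.ne'
  · rintro ⟨j, hj, hcj⟩
    obtain ⟨w, hw, hsum⟩ := exists_pos_sum_mul_eq_zero hj hcj hk hck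
    exact ⟨w, fun i _ => hw i, hsum⟩

end SignChange

section Coparallel

variable {m n R : Type*} [Fintype n]

/-- Coparallelism of the columns `i` and `j` of `A`: a kernel vector of `A` is supported at `i` iff
it is supported at `j`. -/
def Coparallel [NonUnitalNonAssocSemiring R] (A : Matrix m n R) (i j : n) : Prop :=
  ∀ v : n → R, A *ᵥ v = 0 → (v i ≠ 0 ↔ v j ≠ 0)

theorem Coparallel.mul_eq_mul [CommRing R] {A : Matrix m n R} {i j : n} (h : Coparallel A i j)
    {u v : n → R} (hu : A *ᵥ u = 0) (hv : A *ᵥ v = 0) : u i * v j = u j * v i := by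
  have hker : A *ᵥ (u i • v - v i • u) = 0 := by
    simp only [mulVec_sub, mulVec_smul, hu, hv, smul_zero, sub_zero]
  have hi : (u i • v - v i • u) i = 0 := by
    simp only [Pi.sub_apply, Pi.smul_apply, smul_eq_mul]
    ring
  have hj : (u i • v - v i • u) j = 0 := (not_iff_not.1 (h _ hker)).1 hi
  simp only [Pi.sub_apply, Pi.smul_apply, smul_eq_mul] at hj
  linear_combination hj

theorem Coparallel.apply_eq_div_mul [Field R] {A : Matrix m n R} {i j : n} (h : Coparallel A i j)
    {u v : n → R} (hu : A *ᵥ u = 0) (hv : A *ᵥ v = 0) (hui : u i ≠ 0) :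
    v j = u j / u i * v i := by
  rw [div_mul_eq_mul_div, eq_div_iff hui, mul_comm, h.mul_eq_mul hu hv]

end Coparallel

section GaleDual

variable {m n p : Type*} [Fintype n] [Fintype p]

theorem row_eq_smul_row_iff_of_exact {R : Type*} [CommSemiring R] {A : Matrix m n R}
    {B : Matrix n p R} (hAB : Function.Exact B.mulVec A.mulVec) {j k : n} {a : R} :
    B j = a • B k ↔ ∀ v, A *ᵥ v = 0 → v j = a * v k := by
  classical
  constructor
  · intro hrow v hv
    obtain ⟨c, rfl⟩ := (hAB v).1 hv
    simp only [mulVec, hrow, smul_dotProduct, smul_eq_mul]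
  · intro hker
    ext t
    simpa using hker _ ((hAB _).2 ⟨Pi.single t 1, rfl⟩)

theorem map_mulVec_comp {R K : Type*} [NonAssocSemiring R] [NonAssocSemiring K] (f : R →+* K)
    (M : Matrix m n R) (v : n → R) : M.map f *ᵥ (f ∘ v) = f ∘ (M *ᵥ v) :=
  funext fun i => (f.map_mulVec M v i).symm

theorem exact_mulVec_map_algebraMap {R K : Type*} [CommRing R] [CommRing K] [Algebra R K]
    [IsFractionRing R K] {A : Matrix m n R} {B : Matrix n p R}
    (hAB : Function.Exact B.mulVec A.mulVec) :
    Function.Exact (B.map (algebraMap R K)).mulVec (A.map (algebraMap R K)).mulVec := by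
  set f := algebraMap R K
  have hf : Function.Injective f := IsFractionRing.injective R K
  intro v
  constructor
  · intro hv
    obtain ⟨b, hb⟩ := IsLocalization.exist_integer_multiples_of_finite (nonZeroDivisors R) v
    choose u hu using hb
    have hu_smul : f ∘ u = f b • v := by
      ext i
      rw [Function.comp_apply, hu, Algebra.smul_def, Pi.smul_apply, smul_eq_mul]
    have hAu : A *ᵥ u = 0 := by
      have hfAu : f ∘ (A *ᵥ u) = 0 := by
        rw [← map_mulVec_comp, hu_smul, mulVec_smul, hv, smul_zero]
      exact funext fun r => (map_eq_zero_iff f hf).1 (congrFun hfAu r)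
    obtain ⟨c, rfl⟩ := (hAB u).1 hAu
    obtain ⟨e, he⟩ := IsLocalization.map_units K b
    refine ⟨e⁻¹ • (f ∘ c), ?_⟩
    rw [mulVec_smul, map_mulVec_comp, hu_smul, ← he]
    exact inv_smul_smul e v
  · rintro ⟨c, rfl⟩
    have hAB_zero : A * B = 0 := by
      classical
      exact Matrix.ext_of_mulVec_single fun t => by
        rw [← mulVec_mulVec, zero_mulVec]
        exact (hAB _).2 ⟨_, rfl⟩
    rw [mulVec_mulVec, ← Matrix.map_mul, hAB_zero, Matrix.map_zero f (map_zero f), zero_mulVec]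

end GaleDual

/-- Antiparallel vectors: negative multiples of each other. The zero vector is antiparallel to
itself. -/
def Antiparallel (R : Type*) [Zero R] [LT R] {V : Type*} [SMul R V] (x y : V) : Prop :=
  ∃ a : R, a < 0 ∧ x = a • y

section FaceComplement

variable {m n p F : Type*} [Fintype m] [Fintype n] [Field F]

theorem exists_vecMul_eq_iff (A : Matrix m n F) (w : n → F) :
    (∃ l, l ᵥ* A = w) ↔ ∀ v, A *ᵥ v = 0 → w ⬝ᵥ v = 0 := by
  classical
  constructor
  · rintro ⟨l, rfl⟩ v hv
    rw [← dotProduct_mulVec, hv, dotProduct_zero]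
  · intro hw
    have hmem : dotProductEquiv F n w ∈ (LinearMap.ker A.mulVecLin).dualAnnihilator :=
      (Submodule.mem_dualAnnihilator _).2 hw
    rw [← LinearMap.range_dualMap_eq_dualAnnihilator_ker] at hmem
    obtain ⟨g, hg⟩ := hmem
    refine ⟨(dotProductEquiv F m).symm g, (dotProductEquiv F n).injective ?_⟩
    rw [← hg]
    refine LinearMap.ext fun v => ?_
    calc ((dotProductEquiv F m).symm g ᵥ* A) ⬝ᵥ v
        = (dotProductEquiv F m).symm g ⬝ᵥ (A *ᵥ v) := (dotProduct_mulVec _ _ _).symm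
      _ = g (A *ᵥ v) := LinearMap.congr_fun ((dotProductEquiv F m).apply_symm_apply g) _

variable [LinearOrder F]

/-- `S` is a face complement of the configuration of columns of `A`: the columns outside `S` are
those lying on the face cut out by some linear form `l` that is nonnegative on the columns. -/
def IsFaceComplement (A : Matrix m n F) (S : Finset n) : Prop :=
  ∃ l : m → F, (∀ i ∉ S, (l ᵥ* A) i = 0) ∧ ∀ i ∈ S, 0 < (l ᵥ* A) i

theorem isFaceComplement_iff_exists_pos_weights {A : Matrix m n F} {S : Finset n} :
    IsFaceComplement A S ↔ ∃ w : n → F, (∀ i ∈ S, 0 < w i) ∧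
      ∀ v, A *ᵥ v = 0 → ∑ i ∈ S, w i * v i = 0 := by
  classical
  have dotProduct_eq {w : n → F} (hw : ∀ i ∉ S, w i = 0) (v : n → F) :
      w ⬝ᵥ v = ∑ i ∈ S, w i * v i :=
    (Finset.sum_subset S.subset_univ fun i _ hi => by rw [hw i hi, zero_mul]).symm
  constructor
  · rintro ⟨l, hl_zero, hl_pos⟩
    refine ⟨l ᵥ* A, hl_pos, fun v hv => ?_⟩
    rw [← dotProduct_eq hl_zero]
    exact (exists_vecMul_eq_iff A _).1 ⟨l, rfl⟩ v hv
  · rintro ⟨w, hw_pos, hw_ker⟩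
    have hw_zero : ∀ i ∉ S, (if i ∈ S then w i else 0) = 0 := fun i hi => if_neg hi
    obtain ⟨l, hl⟩ := (exists_vecMul_eq_iff A fun i => if i ∈ S then w i else 0).2 fun v hv => by
      rw [dotProduct_eq hw_zero, ← hw_ker v hv]
      exact Finset.sum_congr rfl fun i hi => by rw [if_pos hi]
    refine ⟨l, fun i hi => hl ▸ hw_zero i hi, fun i hi => ?_⟩
    simpa only [hl, if_pos hi] using hw_pos i hi

variable [IsStrictOrderedRing F] {A : Matrix m n F} {S : Finset n} {k : n}

theorem isFaceComplement_of_forall_ker_apply_eq_zero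
    (hker : ∀ i ∈ S, ∀ v, A *ᵥ v = 0 → v i = 0) : IsFaceComplement A S :=
  isFaceComplement_iff_exists_pos_weights.2 ⟨1, fun _ _ => one_pos, fun v hv =>
    Finset.sum_eq_zero fun i hi => by rw [hker i hi v hv, mul_zero]⟩

theorem isFaceComplement_iff_exists_ratio_neg (hcop : ∀ i ∈ S, Coparallel A k i) (hk : k ∈ S)
    {u : n → F} (hu : A *ᵥ u = 0) (huk : u k ≠ 0) :
    IsFaceComplement A S ↔ ∃ j ∈ S, u j / u k < 0 := by
  have sum_eq (w : n → F) {v : n → F} (hv : A *ᵥ v = 0) :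
      ∑ i ∈ S, w i * v i = (∑ i ∈ S, w i * (u i / u k)) * v k := by
    rw [Finset.sum_mul]
    exact Finset.sum_congr rfl fun i hi => by
      rw [(hcop i hi).apply_eq_div_mul hu hv huk, mul_assoc]
  have hck : 0 < u k / u k := by rw [div_self huk]; exact one_pos
  rw [← exists_pos_sum_mul_eq_zero_iff (c := fun i => u i / u k) hk hck,
    isFaceComplement_iff_exists_pos_weights]
  refine exists_congr fun w => and_congr_right fun _ => ⟨fun hw => ?_, fun hw v hv => ?_⟩
  · have hprod := hw u hu
    rw [sum_eq w hu] at hprod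
    exact (mul_eq_zero.1 hprod).resolve_right huk
  · rw [sum_eq w hv, hw, zero_mul]

theorem stmt3_general [Fintype p] {B : Matrix n p F} (hAB : Function.Exact B.mulVec A.mulVec)
    (hS : S.Nonempty) (hcop : ∀ i ∈ S, ∀ j ∈ S, Coparallel A i j) :
    IsFaceComplement A S ↔ ∃ j ∈ S, ∃ k ∈ S, Antiparallel F (B j) (B k) := by
  simp only [Antiparallel, row_eq_smul_row_iff_of_exact hAB]
  obtain ⟨k, hk⟩ := hS
  by_cases hzero : ∀ v, A *ᵥ v = 0 → v k = 0
  · have hker : ∀ i ∈ S, ∀ v, A *ᵥ v = 0 → v i = 0 := fun i hi v hv =>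
      (not_iff_not.1 (hcop k hk i hi v hv)).1 (hzero v hv)
    refine iff_of_true (isFaceComplement_of_forall_ker_apply_eq_zero hker)
      ⟨k, hk, k, hk, -1, neg_one_lt_zero, fun v hv => ?_⟩
    rw [hzero v hv, mul_zero]
  push Not at hzero
  obtain ⟨u, hu, huk⟩ := hzero
  constructor
  · intro hface
    obtain ⟨j, hj, hneg⟩ := (isFaceComplement_iff_exists_ratio_neg (hcop k hk) hk hu huk).1 hface
    exact ⟨j, hj, k, hk, u j / u k, hneg, fun v hv =>
      (hcop k hk j hj).apply_eq_div_mul hu hv huk⟩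
  · rintro ⟨j, hj, i, hi, a, ha, hji⟩
    have hui : u i ≠ 0 := (hcop k hk i hi u hu).1 huk
    refine (isFaceComplement_iff_exists_ratio_neg (hcop i hi) hi hu hui).2 ⟨j, hj, ?_⟩
    rwa [hji u hu, mul_div_cancel_right₀ a hui]

end FaceComplement

/-- a coparallelism class `S` of a non pyramidal regular configuration is a
face complement iff two of its Gale rows are antiparallel. -/
theorem stmt3 (d n : ℕ) (hd : 0 < d) (A : Matrix (Fin d) (Fin n) ℤ)
    (hreg : ∀ i : Fin n, A ⟨0, hd⟩ i = 1)
    (hrank : (A.map (Int.cast : ℤ → ℚ)).rank = d)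
    (hnp : ¬ ∃ (i₀ : Fin n) (l : Fin d → ℚ),
        (∀ i : Fin n, i ≠ i₀ → ∑ r, l r * (A r i : ℚ) = 0) ∧
        ∑ r, l r * (A r i₀ : ℚ) = 1)
    (B : Matrix (Fin n) (Fin (n - d)) ℤ)
    (hBind : ∀ c : Fin (n - d) → ℤ, B.mulVec c = 0 → c = 0)
    (hBspan : ∀ v : Fin n → ℤ, A.mulVec v = 0 ↔ ∃ c : Fin (n - d) → ℤ, v = B.mulVec c)
    (S : Finset (Fin n)) (hSne : S.Nonempty)
    (hScc : ∀ i ∈ S, ∀ j : Fin n, j ∈ S ↔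
      (∀ v : Fin n → ℚ, (A.map (Int.cast : ℤ → ℚ)).mulVec v = 0 → (v i ≠ 0 ↔ v j ≠ 0))) :
    (∃ l : Fin d → ℚ,
        (∀ i ∉ S, ∑ r, l r * (A r i : ℚ) = 0) ∧ ∀ i ∈ S, 0 < ∑ r, l r * (A r i : ℚ)) ↔
      ∃ j ∈ S, ∃ k ∈ S, ∃ α : ℚ, α < 0 ∧
        ∀ t : Fin (n - d), (B j t : ℚ) = α * (B k t : ℚ) := by
  have hAB : Function.Exact B.mulVec A.mulVec := fun v =>
    (hBspan v).trans (exists_congr fun _ => eq_comm)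
  have hgale := stmt3_general (exact_mulVec_map_algebraMap (K := ℚ) hAB) hSne
    fun i hi j hj => (hScc i hi j).1 hj
  simp only [Antiparallel, funext_iff] at hgale
  exact hgale
end

section
/- Let A = (λ_1, …, λ_n) be a regular configuration in ℤ^d of rank d, and let B be a Gale dual of A with rows b_1, …, b_n. For any subset S ⊆ {1, …, n}: Σ_{i∈S} b_i = 0 if and only if there exists ℓ ∈ ℚ^d with ⟨ℓ, λ_i⟩ = 1 for all i ∈ S and ⟨ℓ, λ_i⟩ = 0 for all i ∉ S; that is, the Gale rows indexed by S sum to zero exactly when S is a parallel face complement. -/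
/-!
A Gale dual `B` of `A` fits into an exact sequence `ℤᵏ → ℤⁿ → ℤᵈ` of multiplications by `B` and `A`.
Localization and duality of vector spaces preserve exactness, so multiplying row vectors by `A` and
`B` gives an exact sequence `ℚᵈ → ℚⁿ → ℚᵏ`. The theorem is exactness at the indicator vector of `S`:
its product with `B` is the sum of the rows in `S`, and a preimage under `A` is the functional `ℓ`.
-/

open Function Matrix

theorem exact_dualMap {K V₁ V₂ V₃ : Type*} [Field K] [AddCommGroup V₁] [Module K V₁]
    [AddCommGroup V₂] [Module K V₂] [AddCommGroup V₃] [Module K V₃]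
    {f : V₁ →ₗ[K] V₂} {g : V₂ →ₗ[K] V₃} (h : Exact f g) :
    Exact g.dualMap f.dualMap := by
  rw [LinearMap.exact_iff, LinearMap.ker_dualMap_eq_dualAnnihilator_range,
    LinearMap.range_dualMap_eq_dualAnnihilator_ker, h.linearMap_ker_eq]

theorem eq_indicator_one_iff {α R : Type*} [Zero R] [One R] {f : α → R} {s : Set α} :
    f = s.indicator 1 ↔ (∀ i ∈ s, f i = 1) ∧ ∀ i ∉ s, f i = 0 := by
  classical
  simp only [funext_iff, Set.indicator_apply, Pi.one_apply]
  grind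

theorem indicator_one_vecMul_apply {n k R : Type*} [Fintype n] [NonAssocSemiring R] (S : Finset n)
    (B : Matrix n k R) (t : k) :
    ((S : Set n).indicator 1 ᵥ* B) t = ∑ i ∈ S, B i t := by
  classical
  simp [vecMul, dotProduct, Set.indicator_apply]

section Exactness

variable {m n k : Type*} [Fintype n] [Fintype k]

theorem dualMap_mulVecLin_comp_dotProductEquiv [Fintype m] {R : Type*} [CommSemiring R]
    [DecidableEq m] [DecidableEq n] (A : Matrix m n R) :
    A.mulVecLin.dualMap ∘ₗ (dotProductEquiv R m).toLinearMap =
      (dotProductEquiv R n).toLinearMap ∘ₗ A.vecMulLinear :=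
  LinearMap.ext fun l ↦ LinearMap.ext fun v ↦ dotProduct_mulVec l A v

theorem exact_vecMulLinear [Fintype m] {K : Type*} [Field K] {A : Matrix m n K}
    {B : Matrix n k K} (h : Exact B.mulVecLin A.mulVecLin) :
    Exact A.vecMulLinear B.vecMulLinear := by
  classical
  exact (Exact.iff_of_ladder_linearEquiv (dualMap_mulVecLin_comp_dotProductEquiv A)
    (dualMap_mulVecLin_comp_dotProductEquiv B)).1 (exact_dualMap h)

/-- The coordinatewise algebra map `Rⁿ → Kⁿ`. It is reducible, and written as `LinearMap.pi`, so
that Mathlib's instance recognizes it as a localization of modules when `K` is a localization of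
`R`. -/
abbrev piAlgebraMap (R K n : Type*) [CommSemiring R] [Semiring K] [Algebra R K] :
    (n → R) →ₗ[R] (n → K) :=
  .pi fun i ↦ Algebra.linearMap R K ∘ₗ .proj i

theorem isLocalizedModule_map_mulVecLin [Finite m] {R : Type*} (K : Type*) [CommRing R]
    [CommRing K] [Algebra R K] (M : Submonoid R) [IsLocalization M K] (A : Matrix m n R) :
    IsLocalizedModule.map M (piAlgebraMap R K n) (piAlgebraMap R K m) A.mulVecLin =
      (A.map (algebraMap R K)).mulVecLin.restrictScalars R := by
  refine IsLocalizedModule.linearMap_ext M (piAlgebraMap R K n) (piAlgebraMap R K m) ?_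
  rw [IsLocalizedModule.map_comp]
  exact LinearMap.ext fun v ↦ funext fun i ↦ (algebraMap R K).map_mulVec A v i

theorem exact_mulVecLin_map_algebraMap [Finite m] {R : Type*} (K : Type*) [CommRing R]
    [CommRing K] [Algebra R K] (M : Submonoid R) [IsLocalization M K] {A : Matrix m n R}
    {B : Matrix n k R} (h : Exact B.mulVecLin A.mulVecLin) :
    Exact (B.map (algebraMap R K)).mulVecLin (A.map (algebraMap R K)).mulVecLin := by
  have localized := IsLocalizedModule.map_exact M (piAlgebraMap R K k) (piAlgebraMap R K n)
    (piAlgebraMap R K m) B.mulVecLin A.mulVecLin h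
  rwa [isLocalizedModule_map_mulVecLin, isLocalizedModule_map_mulVecLin] at localized

theorem exact_vecMulLinear_map_algebraMap [Fintype m] {R : Type*} (K : Type*) [CommRing R]
    [Field K] [Algebra R K] [IsFractionRing R K] {A : Matrix m n R} {B : Matrix n k R}
    (h : Exact B.mulVecLin A.mulVecLin) :
    Exact (A.map (algebraMap R K)).vecMulLinear (B.map (algebraMap R K)).vecMulLinear :=
  exact_vecMulLinear (exact_mulVecLin_map_algebraMap K (nonZeroDivisors R) h)

theorem stmt5_general [Fintype m] {R K : Type*} [CommRing R] [Field K] [Algebra R K]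
    [IsFractionRing R K] {A : Matrix m n R} {B : Matrix n k R}
    (hAB : Exact B.mulVecLin A.mulVecLin) (S : Finset n) :
    (∀ t, ∑ i ∈ S, B i t = 0) ↔
      ∃ l : m → K, (∀ i ∈ S, ∑ r, l r * algebraMap R K (A r i) = 1) ∧
        ∀ i ∉ S, ∑ r, l r * algebraMap R K (A r i) = 0 :=
  calc (∀ t, ∑ i ∈ S, B i t = 0)
    _ ↔ (S : Set n).indicator 1 ᵥ* B.map (algebraMap R K) = 0 := by
      simp only [funext_iff, indicator_one_vecMul_apply, map_apply, Pi.zero_apply, ← map_sum,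
        FaithfulSMul.algebraMap_eq_zero_iff]
    _ ↔ ∃ l : m → K, l ᵥ* A.map (algebraMap R K) = (S : Set n).indicator 1 :=
      exact_vecMulLinear_map_algebraMap K hAB _
    _ ↔ _ := exists_congr fun _ ↦ eq_indicator_one_iff

end Exactness

/-- the Gale rows indexed by `S` sum to zero iff `S` is a parallel face
complement of the regular configuration `A`. -/
theorem stmt5 (d n : ℕ) (hd : 0 < d) (A : Matrix (Fin d) (Fin n) ℤ)
    (hreg : ∀ i : Fin n, A ⟨0, hd⟩ i = 1)
    (hrank : (A.map (Int.cast : ℤ → ℚ)).rank = d)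
    (B : Matrix (Fin n) (Fin (n - d)) ℤ)
    (hBind : ∀ c : Fin (n - d) → ℤ, B.mulVec c = 0 → c = 0)
    (hBspan : ∀ v : Fin n → ℤ, A.mulVec v = 0 ↔ ∃ c : Fin (n - d) → ℤ, v = B.mulVec c)
    (S : Finset (Fin n)) :
    (∀ t : Fin (n - d), ∑ i ∈ S, B i t = 0) ↔
      ∃ l : Fin d → ℚ,
        (∀ i ∈ S, ∑ r, l r * (A r i : ℚ) = 1) ∧ ∀ i ∉ S, ∑ r, l r * (A r i : ℚ) = 0 :=
  stmt5_general (fun v ↦ by simp only [mulVecLin_apply, hBspan, eq_comm, Set.mem_range]) S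
end
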